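/- For every integer d ≥ 2, every subset A ⊆ F_q, every index i with 1 ≤ i ≤ d, and every y_i ∈ F_q with y_i ≠ 0, one has Σ_{y_{i+1}, …, y_d ∈ F_q} g(0, …, 0, y_i, y_{i+1}, …, y_d) ≤ |A|^{d−i} · N_{d−1}(A; (−1)^i y_i). -/

import Mathlib

/-- `matCount F d A t` is the number of `d × d` matrices over `F` all of whose entries
lie in `A` and whose determinant equals `t`. -/
noncomputable def matCount (F : Type) [CommRing F] [Fintype F] (d : ℕ) (A : Finset F) (t : F) : ℕ :=
  Nat.card {M : Matrix (Fin d) (Fin d) F // (∀ i j, M i j ∈ A) ∧ M.det = t}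

/-- For a `(d-1) × d` matrix `M` (here `d = e + 1`), `vmat M` is the vector whose `i`-th
coordinate is `(-1)^(i+1)` times the determinant of the minor of `M` obtained by deleting
the `i`-th column (indices `0`-based, corresponding to `(-1)^i det M_i` with `1`-based `i`). -/
def vmat {F : Type} [CommRing F] {e : ℕ} (M : Matrix (Fin e) (Fin (e + 1)) F) :
    Fin (e + 1) → F :=
  fun i => (-1 : F) ^ ((i : ℕ) + 1) * (M.submatrix id i.succAbove).det

/-- `gcount F e A x` is the number of `(d-1) × d` matrices `M` (with `d = e + 1`) over `F`
with all entries in `A` such that `vmat M = x`. -/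
noncomputable def gcount (F : Type) [CommRing F] [Fintype F] (e : ℕ) (A : Finset F)
    (x : Fin (e + 1) → F) : ℕ :=
  Nat.card {M : Matrix (Fin e) (Fin (e + 1)) F // (∀ i j, M i j ∈ A) ∧ vmat M = x}

/-!
A matrix `M` with `e` rows and `e + 1` columns annihilates its vector `vmat M` of signed maximal
minors. If `vmat M` vanishes before `i` but not at `i`, this relation puts column `i` of `M` in the
span of the `e - i` columns to its right. Fix the square matrix left after deleting column `i`; its
determinant is known from `vmat M i`. Then column `i` lies in a fixed subspace of dimension at most
`e - i`, and since a subspace of dimension `k` is parametrised by `k` of its coordinates, at most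
`|A| ^ (e - i)` of its vectors have all entries in `A`.
-/

open Finset Matrix Module

section LinearAlgebra

variable {K ι m n : Type*} [Field K]

lemma exists_finset_card_le_finrank_injOn_restrict (W : Submodule K (ι → K))
    [FiniteDimensional K W] :
    ∃ s : Finset ι, #s ≤ finrank K W ∧ Set.InjOn s.restrict (W : Set (ι → K)) := by
  let coord : ι → Dual K W := fun i => (LinearMap.proj i).comp W.subtype
  obtain ⟨κ, a, ha, hspan, hli⟩ := exists_linearIndependent' K coord
  have := hli.finite
  have := Fintype.ofFinite κ
  refine ⟨univ.map ⟨a, ha⟩, ?_, fun v hv w hw hvw => ?_⟩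
  · simpa only [card_map, card_univ, Subspace.dual_finrank_eq] using hli.fintype_card_le_finrank
  · have agree : Set.EqOn (Dual.eval K W ⟨v, hv⟩) (Dual.eval K W ⟨w, hw⟩)
        (Set.range (coord ∘ a)) := by
      rintro _ ⟨k, rfl⟩
      exact congrFun hvw ⟨a k, by simp⟩
    ext i
    exact LinearMap.eqOn_span agree (hspan.ge (Submodule.subset_span ⟨i, rfl⟩))

open Classical in
lemma card_filter_mem_submodule_le_pow [Fintype ι] (A : Finset K) (W : Submodule K (ι → K)) {k : ℕ}
    (hW : finrank K W ≤ k) (hk : k ≤ Fintype.card ι) :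
    #{c ∈ Fintype.piFinset fun _ : ι => A | c ∈ W} ≤ #A ^ k := by
  obtain ⟨s, hs, hinj⟩ := exists_finset_card_le_finrank_injOn_restrict W
  obtain ⟨t, hst, rfl⟩ := exists_superset_card_eq (hs.trans hW) hk
  have hcard : #(Fintype.piFinset fun _ : t => A) = #A ^ #t := by simp
  rw [← hcard]
  refine card_le_card_of_injOn t.restrict (fun c hc => ?_) fun c hc c' hc' h => ?_
  · simp only [coe_filter, Fintype.mem_piFinset, Set.mem_ofPred_eq] at hc
    simpa using fun j _ => hc.1 j
  · simp only [coe_filter, Set.mem_ofPred_eq] at hc hc'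
    exact hinj hc.2 hc'.2 (funext fun j => congrFun h ⟨j, hst j.2⟩)

lemma col_mem_span_of_mulVec_eq_zero [Fintype n] {M : Matrix m n K} {v : n → K}
    (h : M *ᵥ v = 0) {i : n} (hi : v i ≠ 0) {s : Set n} (hs : ∀ j ≠ i, j ∉ s → v j = 0) :
    M.col i ∈ Submodule.span K (M.col '' s) := by
  classical
  have relation : v i • M.col i + ∑ j ∈ univ.erase i, v j • M.col j = 0 := by
    rw [add_sum_erase _ (fun j => v j • M.col j) (mem_univ i), ← h]
    ext r
    simp [mulVec, dotProduct, mul_comm]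
  rw [← Submodule.smul_mem_iff _ hi, eq_neg_of_add_eq_zero_left relation]
  refine neg_mem (Submodule.sum_mem _ fun j hj => ?_)
  by_cases hjs : j ∈ s
  · exact Submodule.smul_mem _ _ (Submodule.subset_span ⟨j, hjs, rfl⟩)
  · simp [hs j (ne_of_mem_erase hj) hjs]

end LinearAlgebra

section MatricesWithEntriesIn

variable {m n R : Type*} [Fintype m] [DecidableEq m] [Fintype n] [DecidableEq n]

variable (m n) in
/-- The finite set of `m × n` matrices all of whose entries lie in `A`; unlike a filter of `univ`,
it makes sense over an infinite ring. -/
def matricesWithEntriesIn (A : Finset R) : Finset (Matrix m n R) :=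
  Fintype.piFinset fun _ => Fintype.piFinset fun _ => A

@[simp]
lemma mem_matricesWithEntriesIn {A : Finset R} {M : Matrix m n R} :
    M ∈ matricesWithEntriesIn m n A ↔ ∀ r j, M r j ∈ A :=
  Fintype.mem_piFinset.trans (forall_congr' fun _ => Fintype.mem_piFinset)

lemma natCard_entries_mem_and_eq (A : Finset R) (P : Matrix m n R → Prop) [DecidablePred P] :
    Nat.card {M : Matrix m n R // (∀ r j, M r j ∈ A) ∧ P M} =
      #{M ∈ matricesWithEntriesIn m n A | P M} :=
  Nat.subtype_card _ (by simp)

open Classical in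
lemma card_filter_col_mem_span_le_pow {K : Type*} [Field K] (A : Finset K) (M₀ : Matrix m n K)
    {i : n} {s : Finset n} (his : i ∉ s) (hs : #s ≤ Fintype.card m) :
    #{M ∈ matricesWithEntriesIn m n A |
        (∀ j ≠ i, M.col j = M₀.col j) ∧ M.col i ∈ Submodule.span K (M.col '' s)} ≤ #A ^ #s := by
  have hW : finrank K (Submodule.span K (M₀.col '' s)) ≤ #s := by
    rw [← coe_image]
    exact (finrank_span_finset_le_card _).trans card_image_le
  refine le_trans ?_ (card_filter_mem_submodule_le_pow A _ hW hs)
  refine card_le_card_of_injOn (fun M => M.col i) (fun M hM => ?_) fun M hM M' hM' h => ?_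
  · simp only [coe_filter, mem_matricesWithEntriesIn, Set.mem_ofPred_eq] at hM
    obtain ⟨hA, hcol, hspan⟩ := hM
    have hspan_eq : M.col '' s = M₀.col '' s :=
      Set.image_congr fun j hj => hcol j (ne_of_mem_of_not_mem hj his)
    simpa [← hspan_eq, hspan] using fun r => hA r i
  · simp only [coe_filter, Set.mem_ofPred_eq] at hM hM'
    refine ext_col fun j => ?_
    obtain rfl | hj := eq_or_ne j i
    · exact h
    · rw [hM.2.1 j hj, hM'.2.1 j hj]

end MatricesWithEntriesIn

section SignedMinors

variable {F : Type} {e : ℕ}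

lemma mulVec_vmat [CommRing F] (M : Matrix (Fin e) (Fin (e + 1)) F) : M *ᵥ vmat M = 0 := by
  ext r
  -- Expand, along its first row, the determinant of `M` with row `r` repeated on top.
  let N : Matrix (Fin (e + 1)) (Fin (e + 1)) F := of (Fin.cons (M r) M)
  have hN : N.det = 0 := det_zero_of_row_eq (Fin.succ_ne_zero r).symm rfl
  rw [det_succ_row_zero] at hN
  calc ∑ j, M r j * vmat M j
      = -∑ j : Fin (e + 1), (-1) ^ (j : ℕ) * N 0 j * (N.submatrix Fin.succ j.succAbove).det := by
        rw [← sum_neg_distrib]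
        refine sum_congr rfl fun j _ => ?_
        change M r j * ((-1) ^ ((j : ℕ) + 1) * (M.submatrix id j.succAbove).det) =
          -((-1) ^ (j : ℕ) * M r j * (M.submatrix id j.succAbove).det)
        ring
    _ = 0 := by rw [hN, neg_zero]

lemma det_submatrix_succAbove_eq_vmat [CommRing F] (M : Matrix (Fin e) (Fin (e + 1)) F)
    (i : Fin (e + 1)) :
    (M.submatrix id i.succAbove).det = (-1) ^ ((i : ℕ) + 1) * vmat M i := by
  simp [vmat, ← mul_assoc, ← mul_pow]

lemma col_mem_span_image_Ioi [Field F] {M : Matrix (Fin e) (Fin (e + 1)) F} {i : Fin (e + 1)}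
    (hlt : ∀ j < i, vmat M j = 0) (hi : vmat M i ≠ 0) :
    M.col i ∈ Submodule.span F (M.col '' (Ioi i : Finset (Fin (e + 1)))) :=
  col_mem_span_of_mulVec_eq_zero (mulVec_vmat M) hi fun j hj hji =>
    hlt j (lt_of_le_of_ne (by simpa using hji) hj)

lemma matCount_eq_card [CommRing F] [Fintype F] [DecidableEq F] (d : ℕ) (A : Finset F) (t : F) :
    matCount F d A t = #{B ∈ matricesWithEntriesIn (Fin d) (Fin d) A | B.det = t} :=
  natCard_entries_mem_and_eq A _

lemma sum_gcount_eq_card [CommRing F] [Fintype F] (A : Finset F)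
    (P : (Fin (e + 1) → F) → Prop) [DecidablePred P] :
    ∑ x with P x, gcount F e A x =
      #{M ∈ matricesWithEntriesIn (Fin e) (Fin (e + 1)) A | P (vmat M)} := by
  classical
  have hg (x) : gcount F e A x =
      #{M ∈ matricesWithEntriesIn (Fin e) (Fin (e + 1)) A | vmat M = x} :=
    natCard_entries_mem_and_eq A _
  simp only [hg, sum_card_fiberwise_eq_card_filter, mem_filter_univ]

end SignedMinors

theorem stmt_5_general {F : Type} [Field F] [DecidableEq F] {e : ℕ} (A : Finset F)
    (i : Fin (e + 1)) {y : F} (hy : y ≠ 0) :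
    #{M ∈ matricesWithEntriesIn (Fin e) (Fin (e + 1)) A |
        (∀ j, j < i → vmat M j = 0) ∧ vmat M i = y} ≤
      #A ^ (e - (i : ℕ)) *
        #{B ∈ matricesWithEntriesIn (Fin e) (Fin e) A |
          B.det = (-1 : F) ^ ((i : ℕ) + 1) * y} := by
  classical
  refine card_le_mul_card_image_of_maps_to
    (f := fun M => M.submatrix id i.succAbove) (fun M hM => ?_) _ fun B _ => ?_
  · simp only [mem_filter, mem_matricesWithEntriesIn] at hM ⊢
    exact ⟨fun r j => hM.1 r _, by rw [det_submatrix_succAbove_eq_vmat, hM.2.2]⟩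
  · let M₀ : Matrix (Fin e) (Fin (e + 1)) F := of fun r => i.insertNth 0 (B r)
    have hcard : #(Ioi i) = e - i := by simp
    rw [← hcard]
    refine (card_le_card fun M hM => ?_).trans
      (card_filter_col_mem_span_le_pow A M₀ (i := i) (by simp) (by simp))
    simp only [mem_filter] at hM ⊢
    obtain ⟨⟨hA, hlt, hi⟩, rfl⟩ := hM
    refine ⟨hA, fun j hj => ?_, col_mem_span_image_Ioi hlt (hi ▸ hy)⟩
    obtain ⟨k, rfl⟩ := Fin.exists_succAbove_eq hj
    ext r
    simp [M₀]

/-- Statement 5, with `d = e + 1 ≥ 2` and the index `i : Fin (e + 1)` corresponding to the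
`1`-based index `i + 1 ∈ {1, …, d}`; the sum over `(y_{i+1}, …, y_d)` is the sum over all
vectors `x` vanishing before coordinate `i` and equal to the fixed `y ≠ 0` at `i`. -/
theorem stmt_5 (F : Type) [Field F] [Fintype F] [DecidableEq F]
    (hq : Odd (Fintype.card F)) (e : ℕ) (he : 1 ≤ e) (A : Finset F) (i : Fin (e + 1))
    (y : F) (hy : y ≠ 0) :
    ∑ x ∈ Finset.univ.filter
        (fun x : Fin (e + 1) → F => (∀ j, j < i → x j = 0) ∧ x i = y),
        gcount F e A x ≤
      A.card ^ (e - (i : ℕ)) * matCount F e A ((-1 : F) ^ ((i : ℕ) + 1) * y) := by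
  rw [sum_gcount_eq_card, matCount_eq_card]
  exact stmt_5_general A i hy
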